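/- Fix integers $d \geq 1$, $m \geq 2$, $e \geq 1$, indices $1 \leq \alpha \leq \beta \leq d$, an integer $n$ with $0 \leq n < e$, integers $n_i$ with $0 < n_i < e$ for $\alpha < i \leq \beta$, and $\varsigma \in \{0,1\}$, subject to the condition that $\beta > \alpha$ or $\varsigma = 1$. For a positive solution $(x_1,\dots,x_d,y_1,\dots,y_m)$ of $E(p)$ set $z = \sum_{i=\alpha+1}^{\beta} n_i x_i + \varsigma\, y_1$, $\nu_a = n\sum_{i=1}^{\alpha} x_i + z$, and $\nu_b = \sum_{i=1}^{\alpha} x_i + \nu_a$ (so that $0 < \nu_a < p$). Then there exists a constant $M > 0$, independent of $p$, such that for every prime $p$ and every subset $F \subseteq \mathbb{Z}/p\mathbb{Z}$, the number of positive solutions of $E(p)$ for which the residue class $-\,\nu_a^{-1}\nu_b \in \mathbb{Z}/p\mathbb{Z}$ belongs to $F$ is at most $M \cdot |F| \cdot p^{\,d+m-2}$. -/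

import Mathlib

/-- The sum x₁ + ⋯ + x_α of the first α coordinates of a (1-based) tuple
(x₁,…,x_d) represented by a function `Fin d → ℕ`. -/
def firstSum (d α : ℕ) (x : Fin d → ℕ) : ℕ :=
  ∑ i ∈ Finset.univ.filter (fun i : Fin d => (i : ℕ) + 1 ≤ α), x i

/-- The quantity z = ∑_{i=α+1}^{β} nᵢ xᵢ + ς y₁ of the Type V estimate. -/
def zPart (d α β ς : ℕ) (nc : ℕ → ℕ) (x : Fin d → ℕ) (y₁ : ℕ) : ℕ :=
  (∑ i ∈ Finset.univ.filter (fun i : Fin d => α < (i : ℕ) + 1 ∧ (i : ℕ) + 1 ≤ β),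
    nc ((i : ℕ) + 1) * x i) + ς * y₁

/-!
Both `ν_b - ν_a` and `ν_a` are linear forms in the unknowns `u = (x, y)` whose coefficients lie
between `0` and those of `E(p)`; positivity of `u` therefore puts their values strictly between
`0` and `p`. Some unknown `w` (`x_{α+1}` if `α < β`, otherwise `y₁`) occurs in `ν_a` but not in
`ν_b - ν_a`, and some `y`-unknown `l` occurs in neither. Fix all unknowns other than `w` and `l`,
as well as the residue `-ν_a⁻¹ ν_b = -1 - ν_a⁻¹ (ν_b - ν_a)`. Then `ν_b - ν_a` is fixed and
invertible, so `ν_a` is determined modulo `p`, hence so are `w` (as `w < p`) and finally `l`, by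
`E(p)`. This leaves at most `|F| p ^ (d + m - 2)` solutions.
-/

lemma dotProduct_lt_dotProduct_of_pos_right {ι R : Type*} [Fintype ι] [Semiring R] [PartialOrder R]
    [IsStrictOrderedRing R] {a b u : ι → R} (hab : a < b) (hu : ∀ i, 0 < u i) :
    a ⬝ᵥ u < b ⬝ᵥ u := by
  obtain ⟨hle, i, hi⟩ := Pi.lt_def.mp hab
  exact Finset.sum_lt_sum (fun j _ => mul_le_mul_of_nonneg_right (hle j) (hu j).le)
    ⟨i, Finset.mem_univ i, mul_lt_mul_of_pos_right hi (hu i)⟩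

lemma apply_eq_of_dotProduct_eq {ι R : Type*} [Fintype ι] [NonUnitalNonAssocSemiring R]
    [IsRightCancelAdd R] [IsLeftCancelMulZero R] {c u v : ι → R} {i : ι} (hi : c i ≠ 0)
    (hne : ∀ j ≠ i, c j * u j = c j * v j) (huv : c ⬝ᵥ u = c ⬝ᵥ v) : u i = v i := by
  classical
  have hrest : ∑ j ∈ Finset.univ.erase i, c j * u j = ∑ j ∈ Finset.univ.erase i, c j * v j :=
    Finset.sum_congr rfl fun j hj => hne j (Finset.ne_of_mem_erase hj)
  rw [dotProduct, dotProduct, ← Finset.add_sum_erase _ _ (Finset.mem_univ i),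
    ← Finset.add_sum_erase _ _ (Finset.mem_univ i), hrest] at huv
  exact mul_left_cancel₀ hi (add_right_cancel huv)

lemma eq_of_neg_inv_mul_add_eq {K : Type*} [DivisionRing K] {s a b : K} (hs : s ≠ 0)
    (ha : a ≠ 0) (hb : b ≠ 0) (h : -a⁻¹ * (s + a) = -b⁻¹ * (s + b)) : a = b := by
  have hinv : a⁻¹ * s = b⁻¹ * s := by
    simpa only [neg_mul, mul_add, inv_mul_cancel₀ ha, inv_mul_cancel₀ hb, neg_inj,
      add_left_inj] using h
  exact inv_injective (mul_right_cancel₀ hs hinv)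

lemma card_subtype_ne_and_ne {ι : Type*} [Fintype ι] [DecidableEq ι] {w l : ι}
    (hwl : w ≠ l) : Fintype.card {i // i ≠ w ∧ i ≠ l} = Fintype.card ι - 2 := by
  rw [Fintype.card_subtype, ← Finset.card_pair hwl, ← Finset.card_compl]
  congr 1
  ext i
  simp

section LinearForms

open Matrix

variable {ι : Type*} [Fintype ι] {p : ℕ} {c s a u v : ι → ℕ} {w l : ι}

/-- The solutions in positive integers `u i` of the linear equation `∑ i, c i * u i = p`. -/
def positiveSolutions (c : ι → ℕ) (p : ℕ) : Set (ι → ℕ) :=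
  {u | (∀ i, 0 < u i) ∧ c ⬝ᵥ u = p}

/-- The residue `-ν_a⁻¹ ν_b` in `ℤ/pℤ`, where `ν_a` and `ν_b - ν_a` are the values at `u` of the
linear forms with coefficients `a` and `s`. -/
def formResidue (p : ℕ) (s a u : ι → ℕ) : ZMod p :=
  -((a ⬝ᵥ u : ℕ) : ZMod p)⁻¹ * ((s ⬝ᵥ u + a ⬝ᵥ u : ℕ) : ZMod p)

lemma dotProduct_lt_of_mem_positiveSolutions (hu : u ∈ positiveSolutions c p) (hac : a < c) :
    a ⬝ᵥ u < p :=
  hu.2 ▸ dotProduct_lt_dotProduct_of_pos_right hac hu.1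

lemma dotProduct_cast_ne_zero (hu : u ∈ positiveSolutions c p) (ha : 0 < a) (hac : a < c) :
    ((a ⬝ᵥ u : ℕ) : ZMod p) ≠ 0 := by
  have hpos : 0 < a ⬝ᵥ u := by
    simpa only [zero_dotProduct] using dotProduct_lt_dotProduct_of_pos_right ha hu.1
  rw [Ne, ZMod.natCast_eq_zero_iff]
  exact Nat.not_dvd_of_pos_of_lt hpos (dotProduct_lt_of_mem_positiveSolutions hu hac)

lemma apply_lt_of_mem_positiveSolutions [Nontrivial ι] (hc : ∀ i, 0 < c i)
    (hu : u ∈ positiveSolutions c p) (i : ι) : u i < p := by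
  classical
  obtain ⟨j, hji⟩ := exists_ne i
  have hsingle : Pi.single i 1 < c := by
    refine Pi.lt_def.mpr ⟨fun k => ?_, j, by simpa only [Pi.single_eq_of_ne hji] using hc j⟩
    obtain rfl | hk := eq_or_ne k i
    · rw [Pi.single_eq_same]
      exact hc k
    · simp only [Pi.single_eq_of_ne hk, zero_le]
  simpa only [single_one_dotProduct] using dotProduct_lt_of_mem_positiveSolutions hu hsingle

lemma cast_coeff_ne_zero (hu : u ∈ positiveSolutions c p) (hac : a < c) (haw : a w ≠ 0) :
    (a w : ZMod p) ≠ 0 := by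
  have hle : a w ≤ a ⬝ᵥ u :=
    (Nat.le_mul_of_pos_right _ (hu.1 w)).trans
      (Finset.single_le_sum (f := fun i => a i * u i) (fun _ _ => Nat.zero_le _)
        (Finset.mem_univ w))
  rw [Ne, ZMod.natCast_eq_zero_iff]
  exact Nat.not_dvd_of_pos_of_lt (Nat.pos_of_ne_zero haw)
    (hle.trans_lt (dotProduct_lt_of_mem_positiveSolutions hu hac))

lemma dotProduct_cast_eq_of_formResidue_eq [Fact p.Prime] (hs : 0 < s) (hsc : s < c) (ha : 0 < a)
    (hac : a < c) (hu : u ∈ positiveSolutions c p) (hv : v ∈ positiveSolutions c p)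
    (hsuv : s ⬝ᵥ u = s ⬝ᵥ v) (hres : formResidue p s a u = formResidue p s a v) :
    ((a ⬝ᵥ u : ℕ) : ZMod p) = ((a ⬝ᵥ v : ℕ) : ZMod p) := by
  rw [formResidue, formResidue, ← hsuv, Nat.cast_add, Nat.cast_add] at hres
  exact eq_of_neg_inv_mul_add_eq (dotProduct_cast_ne_zero hu hs hsc)
    (dotProduct_cast_ne_zero hu ha hac) (dotProduct_cast_ne_zero hv ha hac) hres

lemma apply_eq_of_dotProduct_cast_eq [Fact p.Prime] [Nontrivial ι] (hc : ∀ i, 0 < c i)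
    (hac : a < c) (haw : a w ≠ 0) (hu : u ∈ positiveSolutions c p)
    (hv : v ∈ positiveSolutions c p) (hne : ∀ i ≠ w, a i * u i = a i * v i)
    (hauv : ((a ⬝ᵥ u : ℕ) : ZMod p) = ((a ⬝ᵥ v : ℕ) : ZMod p)) : u w = v w := by
  have hcast : (u w : ZMod p) = v w := by
    refine apply_eq_of_dotProduct_eq (c := fun i => (a i : ZMod p)) (u := fun i => (u i : ZMod p))
      (v := fun i => (v i : ZMod p)) (cast_coeff_ne_zero hu hac haw)
      (fun i hi => mod_cast congrArg (Nat.cast : ℕ → ZMod p) (hne i hi)) ?_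
    simpa only [dotProduct, Nat.cast_sum, Nat.cast_mul] using hauv
  exact CharP.natCast_injOn_Iio (ZMod p) p (apply_lt_of_mem_positiveSolutions hc hu w)
    (apply_lt_of_mem_positiveSolutions hc hv w) hcast

lemma injOn_formResidue_restrict [Fact p.Prime] (hc : ∀ i, 0 < c i) (hs : 0 < s) (hsc : s < c)
    (hac : a < c) (hwl : w ≠ l) (hsw : s w = 0) (hsl : s l = 0) (haw : a w ≠ 0) (hal : a l = 0) :
    Set.InjOn (fun u => (formResidue p s a u, fun i : {i // i ≠ w ∧ i ≠ l} => u i))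
      (positiveSolutions c p) := by
  intro u hu v hv huv
  obtain ⟨hres, hrestrict⟩ := Prod.mk.inj huv
  have hoff : ∀ i, i ≠ w → i ≠ l → u i = v i := fun i hiw hil => congrFun hrestrict ⟨i, hiw, hil⟩
  have : Nontrivial ι := ⟨w, l, hwl⟩
  have ha : 0 < a := Pi.lt_def.mpr ⟨fun _ => Nat.zero_le _, w, Nat.pos_of_ne_zero haw⟩
  have hsuv : s ⬝ᵥ u = s ⬝ᵥ v := Finset.sum_congr rfl fun i _ => by
    by_cases hiw : i = w
    · simp only [hiw, hsw, zero_mul]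
    by_cases hil : i = l
    · simp only [hil, hsl, zero_mul]
    rw [hoff i hiw hil]
  have hw : u w = v w := by
    refine apply_eq_of_dotProduct_cast_eq hc hac haw hu hv (fun i hiw => ?_)
      (dotProduct_cast_eq_of_formResidue_eq hs hsc ha hac hu hv hsuv hres)
    by_cases hil : i = l
    · simp only [hil, hal, zero_mul]
    · rw [hoff i hiw hil]
  have hne_l : ∀ i ≠ l, u i = v i := fun i hil => by
    by_cases hiw : i = w
    · rw [hiw, hw]
    · exact hoff i hiw hil
  have hl : u l = v l := apply_eq_of_dotProduct_eq (hc l).ne'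
    (fun i hil => congrArg (c i * ·) (hne_l i hil)) (hu.2.trans hv.2.symm)
  funext i
  by_cases hil : i = l
  · rw [hil, hl]
  · exact hne_l i hil

theorem ncard_positiveSolutions_formResidue_mem_le (hp : p.Prime) (F : Finset (ZMod p))
    (hc : ∀ i, 0 < c i) (hs : 0 < s) (hsc : s ≤ c) (hac : a ≤ c) (hwl : w ≠ l) (hsw : s w = 0)
    (hsl : s l = 0) (haw : a w ≠ 0) (hal : a l = 0) :
    {u ∈ positiveSolutions c p | formResidue p s a u ∈ F}.ncard ≤
      F.card * p ^ (Fintype.card ι - 2) := by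
  classical
  have : Fact p.Prime := ⟨hp⟩
  have : Nontrivial ι := ⟨w, l, hwl⟩
  have hsc' : s < c := Pi.lt_def.mpr ⟨hsc, l, by simpa only [hsl] using hc l⟩
  have hac' : a < c := Pi.lt_def.mpr ⟨hac, l, by simpa only [hal] using hc l⟩
  let box : Finset (ZMod p × ({i // i ≠ w ∧ i ≠ l} → ℕ)) :=
    F ×ˢ Fintype.piFinset fun _ => Finset.range p
  have hcard : box.card = F.card * p ^ (Fintype.card ι - 2) := by
    simp only [box, Finset.card_product, Fintype.card_piFinset, Finset.card_range,
      Finset.prod_const, Finset.card_univ, card_subtype_ne_and_ne hwl]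
  rw [← hcard, ← Set.ncard_coe_finset]
  refine Set.ncard_le_ncard_of_injOn _ (fun u hu => ?_)
    ((injOn_formResidue_restrict hc hs hsc' hac' hwl hsw hsl haw hal).mono (Set.sep_subset _ _))
    box.finite_toSet
  simp only [box, Finset.mem_coe, Finset.mem_product, Fintype.mem_piFinset, Finset.mem_range]
  exact ⟨hu.2, fun i => apply_lt_of_mem_positiveSolutions hc hu.1 i⟩

lemma ncard_positiveSolutions_sum {κ : Type*} [Fintype κ] (c s a : ι ⊕ κ → ℕ)
    (F : Finset (ZMod p)) :
    {u ∈ positiveSolutions c p | formResidue p s a u ∈ F}.ncard =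
      {xy : (ι → ℕ) × (κ → ℕ) | (∀ i, 0 < xy.1 i) ∧ (∀ j, 0 < xy.2 j) ∧
        c ⬝ᵥ Sum.elim xy.1 xy.2 = p ∧
        -((a ⬝ᵥ Sum.elim xy.1 xy.2 : ℕ) : ZMod p)⁻¹ *
          ((s ⬝ᵥ Sum.elim xy.1 xy.2 + a ⬝ᵥ Sum.elim xy.1 xy.2 : ℕ) : ZMod p) ∈ F}.ncard := by
  let split := Equiv.sumArrowEquivProdArrow ι κ ℕ
  rw [← Set.ncard_preimage_of_injective_subset_range split.symm.injective
    (by rw [split.symm.range_eq_univ]; exact Set.subset_univ _)]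
  congr 1
  ext ⟨x, y⟩
  change Sum.elim x y ∈ {u ∈ positiveSolutions c p | formResidue p s a u ∈ F} ↔ _
  simp only [Set.mem_ofPred_eq, positiveSolutions, formResidue, Sum.forall, Sum.elim_inl,
    Sum.elim_inr, and_assoc]

end LinearForms

section TypeV

open Matrix

variable {d m e α β n ς : ℕ} {nc : ℕ → ℕ} {j₀ : Fin m}

/-- The coefficients of `E(p)` on the unknowns `x₁, …, x_d, y₁, …, y_m`. -/
def equationCoeff (d m e : ℕ) : Fin d ⊕ Fin m → ℕ :=
  Sum.elim (fun _ => e) (fun _ => 1)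

/-- The coefficients of `ν_b - ν_a = x₁ + ⋯ + x_α`; `Fin d` is 0-based, as in `firstSum`. -/
def firstSumCoeff (d m α : ℕ) : Fin d ⊕ Fin m → ℕ :=
  Sum.elim (fun i => if (i : ℕ) + 1 ≤ α then 1 else 0) 0

/-- The coefficients of `z = ∑_{i=α+1}^{β} nᵢ xᵢ + ς y₁`, where `j₀` is the index of `y₁`. -/
def zPartCoeff (d α β ς : ℕ) (nc : ℕ → ℕ) (j₀ : Fin m) : Fin d ⊕ Fin m → ℕ :=
  Sum.elim (fun i => if α < (i : ℕ) + 1 ∧ (i : ℕ) + 1 ≤ β then nc ((i : ℕ) + 1) else 0)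
    (Pi.single j₀ ς)

/-- The coefficients of `ν_a = n (x₁ + ⋯ + x_α) + z`. -/
def nuCoeff (d α β n ς : ℕ) (nc : ℕ → ℕ) (j₀ : Fin m) : Fin d ⊕ Fin m → ℕ :=
  n • firstSumCoeff d m α + zPartCoeff d α β ς nc j₀

lemma equationCoeff_dotProduct (x : Fin d → ℕ) (y : Fin m → ℕ) :
    equationCoeff d m e ⬝ᵥ Sum.elim x y = e * ∑ i, x i + ∑ j, y j := by
  rw [equationCoeff, sumElim_dotProduct_sumElim]
  simp only [dotProduct, Finset.mul_sum, one_mul]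

lemma firstSumCoeff_dotProduct (x : Fin d → ℕ) (y : Fin m → ℕ) :
    firstSumCoeff d m α ⬝ᵥ Sum.elim x y = firstSum d α x := by
  rw [firstSumCoeff, sumElim_dotProduct_sumElim, zero_dotProduct, add_zero]
  simp only [dotProduct, ite_mul, one_mul, zero_mul, firstSum, Finset.sum_filter]

lemma zPartCoeff_dotProduct (x : Fin d → ℕ) (y : Fin m → ℕ) :
    zPartCoeff d α β ς nc j₀ ⬝ᵥ Sum.elim x y = zPart d α β ς nc x (y j₀) := by
  rw [zPartCoeff, sumElim_dotProduct_sumElim, single_dotProduct]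
  simp only [dotProduct, ite_mul, zero_mul, zPart, Finset.sum_filter]

lemma nuCoeff_dotProduct (x : Fin d → ℕ) (y : Fin m → ℕ) :
    nuCoeff d α β n ς nc j₀ ⬝ᵥ Sum.elim x y =
      n * firstSum d α x + zPart d α β ς nc x (y j₀) := by
  rw [nuCoeff, add_dotProduct, smul_dotProduct, firstSumCoeff_dotProduct, zPartCoeff_dotProduct,
    smul_eq_mul]

lemma equationCoeff_pos (he : 1 ≤ e) (i : Fin d ⊕ Fin m) : 0 < equationCoeff d m e i := by
  cases i with
  | inl i => exact he
  | inr j => exact one_pos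

lemma firstSumCoeff_pos (hd : 1 ≤ d) (hα : 1 ≤ α) : 0 < firstSumCoeff d m α :=
  Pi.lt_def.mpr ⟨fun _ => Nat.zero_le _, Sum.inl ⟨0, hd⟩,
    by simp only [firstSumCoeff, Sum.elim_inl, zero_add, if_pos hα, Pi.zero_apply, one_pos]⟩

lemma firstSumCoeff_le_equationCoeff (he : 1 ≤ e) :
    firstSumCoeff d m α ≤ equationCoeff d m e := by
  refine Sum.elim_le_elim_iff.mpr ⟨fun i => ?_, fun j => Nat.zero_le _⟩
  dsimp only
  split_ifs <;> omega

lemma nuCoeff_inl (i : Fin d) :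
    nuCoeff d α β n ς nc j₀ (Sum.inl i) =
      if (i : ℕ) + 1 ≤ α then n else if (i : ℕ) + 1 ≤ β then nc ((i : ℕ) + 1) else 0 := by
  simp only [nuCoeff, firstSumCoeff, zPartCoeff, Pi.add_apply, Pi.smul_apply, Sum.elim_inl,
    smul_eq_mul, mul_ite, mul_one, mul_zero]
  split_ifs <;> omega

lemma nuCoeff_inr (j : Fin m) :
    nuCoeff d α β n ς nc j₀ (Sum.inr j) = if j = j₀ then ς else 0 := by
  simp [nuCoeff, firstSumCoeff, zPartCoeff, Pi.single_apply]

lemma nuCoeff_le_equationCoeff (hn : n ≤ e) (hnc : ∀ i, α < i → i ≤ β → nc i ≤ e) (hς : ς ≤ 1) :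
    nuCoeff d α β n ς nc j₀ ≤ equationCoeff d m e := by
  rintro (i | j)
  · rw [nuCoeff_inl, equationCoeff, Sum.elim_inl]
    split_ifs with hiα hiβ
    · exact hn
    · exact hnc _ (not_le.mp hiα) hiβ
    · exact Nat.zero_le e
  · rw [nuCoeff_inr, equationCoeff, Sum.elim_inr]
    split_ifs
    · exact hς
    · exact Nat.zero_le 1

lemma exists_firstSumCoeff_eq_zero_nuCoeff_ne_zero (hβ : β ≤ d)
    (hnc : ∀ i, α < i → i ≤ β → 0 < nc i) (hcond : α < β ∨ ς ≠ 0) :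
    ∃ w, firstSumCoeff d m α w = 0 ∧ nuCoeff d α β n ς nc j₀ w ≠ 0 := by
  rcases hcond with hαβ | hς
  · have hα : ¬α + 1 ≤ α := Nat.not_succ_le_self α
    refine ⟨Sum.inl ⟨α, hαβ.trans_le hβ⟩, if_neg hα, ?_⟩
    rw [nuCoeff_inl, if_neg hα, if_pos (Nat.succ_le_of_lt hαβ)]
    exact (hnc _ (Nat.lt_succ_self α) hαβ).ne'
  · exact ⟨Sum.inr j₀, rfl, by rwa [nuCoeff_inr, if_pos rfl]⟩

end TypeV

/-- Type V counting estimate: fix d ≥ 1, m ≥ 2, e ≥ 1, indices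
1 ≤ α ≤ β ≤ d, 0 ≤ n < e, integers nᵢ with 0 < nᵢ < e for α < i ≤ β, and
ς ∈ {0,1}, with β > α or ς = 1.  For a positive solution of
e(x₁+⋯+x_d) + (y₁+⋯+y_m) = p set z = ∑_{i=α+1}^{β} nᵢ xᵢ + ς y₁,
ν_a = n(x₁+⋯+x_α) + z and ν_b = (x₁+⋯+x_α) + ν_a.  Then there is M > 0,
independent of p, such that for every prime p and every F ⊆ ℤ/pℤ the number of
positive solutions with -ν_a⁻¹ ν_b ∈ F is at most M·|F|·p^(d+m-2). -/
theorem stmt_6 (d m e α β n ς : ℕ) (nc : ℕ → ℕ)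
    (hd : 1 ≤ d) (hm : 2 ≤ m) (he : 1 ≤ e)
    (hα : 1 ≤ α) (hαβ : α ≤ β) (hβ : β ≤ d)
    (hn : n < e)
    (hnc : ∀ i, α < i → i ≤ β → 0 < nc i ∧ nc i < e)
    (hς : ς = 0 ∨ ς = 1)
    (hcond : α < β ∨ ς = 1) :
    ∃ M : ℕ, 0 < M ∧ ∀ p : ℕ, p.Prime → ∀ F : Finset (ZMod p),
      Set.ncard {xy : (Fin d → ℕ) × (Fin m → ℕ) |
        (∀ i, 0 < xy.1 i) ∧ (∀ j, 0 < xy.2 j) ∧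
        e * (∑ i, xy.1 i) + (∑ j, xy.2 j) = p ∧
        -(((n * firstSum d α xy.1 + zPart d α β ς nc xy.1 (xy.2 ⟨0, by omega⟩) : ℕ) : ZMod p))⁻¹
          * (((firstSum d α xy.1 +
              (n * firstSum d α xy.1 + zPart d α β ς nc xy.1 (xy.2 ⟨0, by omega⟩)) : ℕ) : ZMod p))
          ∈ F}
      ≤ M * F.card * p ^ (d + m - 2) := by
  let j₀ : Fin m := ⟨0, by omega⟩
  have : Nontrivial (Fin m) := Fin.nontrivial_iff_two_le.mpr hm
  obtain ⟨l, hl⟩ := exists_ne j₀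
  obtain ⟨w, hsw, haw⟩ := exists_firstSumCoeff_eq_zero_nuCoeff_ne_zero (n := n) (j₀ := j₀) hβ
    (fun i hiα hiβ => (hnc i hiα hiβ).1) (by omega : α < β ∨ ς ≠ 0)
  have hal : nuCoeff d α β n ς nc j₀ (Sum.inr l) = 0 := by rw [nuCoeff_inr, if_neg hl]
  have hwl : w ≠ Sum.inr l := fun h => haw (h ▸ hal)
  refine ⟨1, one_pos, fun p hp F => ?_⟩
  have hcount := ncard_positiveSolutions_formResidue_mem_le hp F (equationCoeff_pos he)
    (firstSumCoeff_pos hd hα) (firstSumCoeff_le_equationCoeff he)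
    (nuCoeff_le_equationCoeff hn.le (fun i hiα hiβ => (hnc i hiα hiβ).2.le) (by omega))
    hwl hsw rfl haw hal
  rw [ncard_positiveSolutions_sum, Fintype.card_sum, Fintype.card_fin,
    Fintype.card_fin] at hcount
  simpa only [equationCoeff_dotProduct, firstSumCoeff_dotProduct, nuCoeff_dotProduct, one_mul]
    using hcount
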